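/- Smooth dependence of the worst-case volatility on the uncertainty-aversion parameter: for every L > 0 there exist ψ₁ > 0 and M > 0 such that for every (t,s,y) ∈ D and ϑ̃ ∈ [−L,L] there exists a three times continuously differentiable function ς* : (−ψ₁, ψ₁) → (0,K) with ς*(0) = σ̄(t,s), (dς*/dψ)(0) = σ̃(t,s,y), |d²ς*/dψ²| ≤ M on (−ψ₁,ψ₁), which satisfies for all ψ ∈ (−ψ₁,ψ₁) the equation U'(y) f'(t,s,y; ς*(ψ)) − s² V̄_ss(t,s) ς*(ψ) w^ψ_y(t,s,y) ψ + ς*(ψ) s² ( w^ψ_ss(t,s,y) + 2ϑ̃ψ w^ψ_sy(t,s,y) + ϑ̃²ψ² w^ψ_yy(t,s,y) ) ψ = 0, and such that for each ψ ∈ (0,ψ₁) the point ς*(ψ) is a minimiser over [0,K] of the function ς ↦ H^ψ(t,s,y; V̄_s(t,s) + ϑ̃ψ, ς). -/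

import Mathlib

open Set

/-- The data of the hedging problem with small uncertainty aversion: the constants
`T, K, ε, y_l, y_u`, the reference volatility `σ̄` (`sb`), the reference value `V̄` (`V`)
with its `s`-derivatives `Vs, Vss`, the penalty function `f` with its `ς`-derivatives
`f1, ..., f4`, the utility `U` with derivatives `U1, U2, U3`, and the correction terms
`w̃` (`wt`) and `ŵ` (`wh`) together with their partial derivatives. -/
structure HedgeData where
  T : ℝ
  K : ℝ
  eps : ℝ
  yl : ℝ
  yu : ℝ
  sb : ℝ → ℝ → ℝ
  V : ℝ → ℝ → ℝ
  Vs : ℝ → ℝ → ℝ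
  Vss : ℝ → ℝ → ℝ
  f : ℝ → ℝ → ℝ → ℝ → ℝ
  f1 : ℝ → ℝ → ℝ → ℝ → ℝ
  f2 : ℝ → ℝ → ℝ → ℝ → ℝ
  f3 : ℝ → ℝ → ℝ → ℝ → ℝ
  f4 : ℝ → ℝ → ℝ → ℝ → ℝ
  U : ℝ → ℝ
  U1 : ℝ → ℝ
  U2 : ℝ → ℝ
  U3 : ℝ → ℝ
  wt : ℝ → ℝ → ℝ → ℝ
  wtT : ℝ → ℝ → ℝ → ℝ
  wtS : ℝ → ℝ → ℝ → ℝ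
  wtY : ℝ → ℝ → ℝ → ℝ
  wtSS : ℝ → ℝ → ℝ → ℝ
  wtSY : ℝ → ℝ → ℝ → ℝ
  wtYY : ℝ → ℝ → ℝ → ℝ
  wh : ℝ → ℝ → ℝ → ℝ
  whT : ℝ → ℝ → ℝ → ℝ
  whS : ℝ → ℝ → ℝ → ℝ
  whY : ℝ → ℝ → ℝ → ℝ
  whSS : ℝ → ℝ → ℝ → ℝ
  whSY : ℝ → ℝ → ℝ → ℝ
  whYY : ℝ → ℝ → ℝ → ℝ

/-- The candidate value function `w^ψ(t,s,y) = U(y) - U'(y) w̃(t,s,y) ψ + U'(y) ŵ(t,s,y) ψ²`. -/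
noncomputable def HedgeData.wPsi (d : HedgeData) (ψ t s y : ℝ) : ℝ :=
  d.U y - d.U1 y * d.wt t s y * ψ + d.U1 y * d.wh t s y * ψ ^ 2

/-- Partial derivative `w^ψ_t`. -/
noncomputable def HedgeData.wPsiT (d : HedgeData) (ψ t s y : ℝ) : ℝ :=
  -(d.U1 y * d.wtT t s y) * ψ + d.U1 y * d.whT t s y * ψ ^ 2

/-- Partial derivative `w^ψ_y`. -/
noncomputable def HedgeData.wPsiY (d : HedgeData) (ψ t s y : ℝ) : ℝ :=
  d.U1 y - (d.U2 y * d.wt t s y + d.U1 y * d.wtY t s y) * ψ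
    + (d.U2 y * d.wh t s y + d.U1 y * d.whY t s y) * ψ ^ 2

/-- Partial derivative `w^ψ_ss`. -/
noncomputable def HedgeData.wPsiSS (d : HedgeData) (ψ t s y : ℝ) : ℝ :=
  -(d.U1 y * d.wtSS t s y) * ψ + d.U1 y * d.whSS t s y * ψ ^ 2

/-- Partial derivative `w^ψ_sy`. -/
noncomputable def HedgeData.wPsiSY (d : HedgeData) (ψ t s y : ℝ) : ℝ :=
  -(d.U2 y * d.wtS t s y + d.U1 y * d.wtSY t s y) * ψ
    + (d.U2 y * d.whS t s y + d.U1 y * d.whSY t s y) * ψ ^ 2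

/-- Partial derivative `w^ψ_yy`. -/
noncomputable def HedgeData.wPsiYY (d : HedgeData) (ψ t s y : ℝ) : ℝ :=
  d.U2 y - (d.U3 y * d.wt t s y + 2 * d.U2 y * d.wtY t s y + d.U1 y * d.wtYY t s y) * ψ
    + (d.U3 y * d.wh t s y + 2 * d.U2 y * d.whY t s y + d.U1 y * d.whYY t s y) * ψ ^ 2

/-- `σ̃(t,s,y) = σ̄(t,s) s² V̄_ss(t,s) / f''(t,s,y;σ̄(t,s))`. -/
noncomputable def HedgeData.sigmaTilde (d : HedgeData) (t s y : ℝ) : ℝ :=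
  d.sb t s * s ^ 2 * d.Vss t s / d.f2 t s y (d.sb t s)

/-- `θ̃(t,s,y) = w̃_s(t,s,y) + (U'(y)/U''(y)) w̃_sy(t,s,y)`. -/
noncomputable def HedgeData.thetaTilde (d : HedgeData) (t s y : ℝ) : ℝ :=
  d.wtS t s y + d.U1 y / d.U2 y * d.wtSY t s y

/-- The candidate volatility `σ^ψ = σ̄ + σ̃ ψ`. -/
noncomputable def HedgeData.sigmaPsi (d : HedgeData) (ψ t s y : ℝ) : ℝ :=
  d.sb t s + d.sigmaTilde t s y * ψ

/-- The candidate strategy `θ^ψ = V̄_s + θ̃ ψ`. -/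
noncomputable def HedgeData.thetaPsi (d : HedgeData) (ψ t s y : ℝ) : ℝ :=
  d.Vs t s + d.thetaTilde t s y * ψ

/-- The Hamiltonian `H^ψ(t,s,y;ϑ,ς)`. -/
noncomputable def HedgeData.Ham (d : HedgeData) (ψ t s y ϑ ς : ℝ) : ℝ :=
  1 / ψ * d.U1 y * d.f t s y ς
    + 1 / 2 * s ^ 2 * d.Vss t s * ((d.sb t s) ^ 2 - ς ^ 2) * d.wPsiY ψ t s y
    + 1 / 2 * ς ^ 2 * s ^ 2 *
      (d.wPsiSS ψ t s y + 2 * (ϑ - d.Vs t s) * d.wPsiSY ψ t s y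
        + (ϑ - d.Vs t s) ^ 2 * d.wPsiYY ψ t s y)

/-- The standing assumptions (Assumption 3.1 of the paper). -/
structure HedgeData.Assumptions (d : HedgeData) : Prop where
  hT : 0 < d.T
  hK : 1 < d.K
  heps : 0 < d.eps
  hy : d.yl < d.yu
  sb_mem : ∀ t ∈ Icc (0:ℝ) d.T, ∀ s ∈ Icc d.K⁻¹ d.K, d.sb t s ∈ Icc (0:ℝ) d.K
  sb_lb : ∀ t ∈ Icc (0:ℝ) d.T, ∀ s ∈ Ioo d.K⁻¹ d.K, d.eps ≤ d.sb t s
  sb_ub : ∀ t ∈ Icc (0:ℝ) d.T, ∀ s ∈ Ioo d.K⁻¹ d.K, d.sb t s ≤ d.K - d.eps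
  sb_bdry : ∀ t ∈ Icc (0:ℝ) d.T, d.sb t d.K⁻¹ = 0 ∧ d.sb t d.K = 0
  V_derivS : ∀ t ∈ Ioo (0:ℝ) d.T, ∀ s ∈ Ioo d.K⁻¹ d.K, HasDerivAt (d.V t) (d.Vs t s) s
  V_derivSS : ∀ t ∈ Ioo (0:ℝ) d.T, ∀ s ∈ Ioo d.K⁻¹ d.K, HasDerivAt (d.Vs t) (d.Vss t s) s
  Vss_cont : ∀ t ∈ Ioo (0:ℝ) d.T, ContinuousOn (d.Vss t) (Ioo d.K⁻¹ d.K)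
  Vss_bdd : ∀ t ∈ Ioo (0:ℝ) d.T, ∀ s ∈ Ioo d.K⁻¹ d.K, |s ^ 2 * d.Vss t s| ≤ d.K
  f_deriv1 : ∀ t s y ς : ℝ, HasDerivAt (d.f t s y) (d.f1 t s y ς) ς
  f_deriv2 : ∀ t s y ς : ℝ, HasDerivAt (d.f1 t s y) (d.f2 t s y ς) ς
  f_deriv3 : ∀ t s y ς : ℝ, HasDerivAt (d.f2 t s y) (d.f3 t s y ς) ς
  f_deriv4 : ∀ t s y ς : ℝ, HasDerivAt (d.f3 t s y) (d.f4 t s y ς) ς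
  f4_cont : ∀ t s y : ℝ, Continuous (d.f4 t s y)
  f_nonneg : ∀ t s y ς : ℝ, 0 ≤ ς → 0 ≤ d.f t s y ς
  f_min : ∀ t ∈ Ioo (0:ℝ) d.T, ∀ s ∈ Ioo d.K⁻¹ d.K, ∀ y ∈ Ioo d.yl d.yu,
    d.f t s y (d.sb t s) = 0 ∧ d.f1 t s y (d.sb t s) = 0
  f2_bdd : ∀ t ∈ Ioo (0:ℝ) d.T, ∀ s ∈ Ioo d.K⁻¹ d.K, ∀ y ∈ Ioo d.yl d.yu,
    ∀ ς ∈ Icc (0:ℝ) d.K, 1 / d.K ≤ d.f2 t s y ς ∧ d.f2 t s y ς ≤ d.K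
  f34_bdd : ∀ t ∈ Ioo (0:ℝ) d.T, ∀ s ∈ Ioo d.K⁻¹ d.K, ∀ y ∈ Ioo d.yl d.yu,
    ∀ ς ∈ Icc (0:ℝ) d.K, |d.f3 t s y ς| ≤ d.K ∧ |d.f4 t s y ς| ≤ d.K
  U_deriv1 : ∀ y : ℝ, HasDerivAt d.U (d.U1 y) y
  U_deriv2 : ∀ y : ℝ, HasDerivAt d.U1 (d.U2 y) y
  U_deriv3 : ∀ y : ℝ, HasDerivAt d.U2 (d.U3 y) y
  U3_cont : Continuous d.U3
  U1_pos : ∀ y : ℝ, 0 < d.U1 y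
  U2_neg : ∀ y : ℝ, d.U2 y < 0
  wt_cont : ContinuousOn (fun p : ℝ × ℝ × ℝ => d.wt p.1 p.2.1 p.2.2)
    (Icc 0 d.T ×ˢ Icc d.K⁻¹ d.K ×ˢ Icc d.yl d.yu)
  wh_cont : ContinuousOn (fun p : ℝ × ℝ × ℝ => d.wh p.1 p.2.1 p.2.2)
    (Icc 0 d.T ×ˢ Icc d.K⁻¹ d.K ×ˢ Icc d.yl d.yu)
  wt_deriv : ∀ t ∈ Ioo (0:ℝ) d.T, ∀ s ∈ Ioo d.K⁻¹ d.K, ∀ y ∈ Ioo d.yl d.yu,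
    HasDerivAt (fun t' => d.wt t' s y) (d.wtT t s y) t ∧
    HasDerivAt (fun s' => d.wt t s' y) (d.wtS t s y) s ∧
    HasDerivAt (fun y' => d.wt t s y') (d.wtY t s y) y ∧
    HasDerivAt (fun s' => d.wtS t s' y) (d.wtSS t s y) s ∧
    HasDerivAt (fun y' => d.wtS t s y') (d.wtSY t s y) y ∧
    HasDerivAt (fun y' => d.wtY t s y') (d.wtYY t s y) y
  wh_deriv : ∀ t ∈ Ioo (0:ℝ) d.T, ∀ s ∈ Ioo d.K⁻¹ d.K, ∀ y ∈ Ioo d.yl d.yu,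
    HasDerivAt (fun t' => d.wh t' s y) (d.whT t s y) t ∧
    HasDerivAt (fun s' => d.wh t s' y) (d.whS t s y) s ∧
    HasDerivAt (fun y' => d.wh t s y') (d.whY t s y) y ∧
    HasDerivAt (fun s' => d.whS t s' y) (d.whSS t s y) s ∧
    HasDerivAt (fun y' => d.whS t s y') (d.whSY t s y) y ∧
    HasDerivAt (fun y' => d.whY t s y') (d.whYY t s y) y
  wt_deriv_cont : ∀ g ∈ [d.wtT, d.wtS, d.wtY, d.wtSS, d.wtSY, d.wtYY],
    ContinuousOn (fun p : ℝ × ℝ × ℝ => g p.1 p.2.1 p.2.2)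
      (Ioo 0 d.T ×ˢ Ioo d.K⁻¹ d.K ×ˢ Ioo d.yl d.yu)
  wh_deriv_cont : ∀ g ∈ [d.whT, d.whS, d.whY, d.whSS, d.whSY, d.whYY],
    ContinuousOn (fun p : ℝ × ℝ × ℝ => g p.1 p.2.1 p.2.2)
      (Ioo 0 d.T ×ˢ Ioo d.K⁻¹ d.K ×ˢ Ioo d.yl d.yu)
  wt_bdd : ∀ g ∈ [d.wtT, d.wtS, d.wtY, d.wtSS, d.wtSY, d.wtYY],
    ∀ t ∈ Ioo (0:ℝ) d.T, ∀ s ∈ Ioo d.K⁻¹ d.K, ∀ y ∈ Ioo d.yl d.yu, |g t s y| ≤ d.K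
  wh_bdd : ∀ g ∈ [d.whT, d.whS, d.whY, d.whSS, d.whSY, d.whYY],
    ∀ t ∈ Ioo (0:ℝ) d.T, ∀ s ∈ Ioo d.K⁻¹ d.K, ∀ y ∈ Ioo d.yl d.yu, |g t s y| ≤ d.K

/-!
Divided by `U'(y)`, the first-order condition reads `f'(ς) = p(ψ) ς`, where `p(0) = 0`,
`p'(0) = s² V̄_ss`, and the derivatives of `p` are bounded uniformly in `(t,s,y,ϑ̃)`. Since `f''` is
bounded below by a positive constant, for small `ψ` the map `ς ↦ f'(ς) - p(ψ) ς` is strictly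
increasing and changes sign close to `σ̄`. Hence it has a unique zero `ς*(ψ)`, smooth by the
implicit function theorem, and differentiating `f'(ς*) = p ς*` once and twice gives `ς*'(0)` and the
bound on `ς*''`. Up to a constant the Hamiltonian is `(U'(y) / ψ) (f(ς) - p(ψ) ς² / 2)`, whose
derivative in `ς` has the sign of `f'(ς) - p(ψ) ς`, so `ς*(ψ)` is its minimiser for `ψ > 0`.
-/

open Filter Topology

section ImplicitFunction

variable {𝕜 E₁ E₂ F : Type*} [RCLike 𝕜]
  [NormedAddCommGroup E₁] [NormedSpace 𝕜 E₁] [CompleteSpace E₁]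
  [NormedAddCommGroup E₂] [NormedSpace 𝕜 E₂] [CompleteSpace E₂]
  [NormedAddCommGroup F] [NormedSpace 𝕜 F] [CompleteSpace F]

theorem contDiffAt_of_eventually_unique_zero {n : WithTop ℕ∞} {Φ : E₁ × E₂ → F} {φ : E₁ → E₂}
    {x₀ : E₁} (hΦ : ContDiffAt 𝕜 n Φ (x₀, φ x₀)) (hn : n ≠ 0)
    (hinv : (fderiv 𝕜 Φ (x₀, φ x₀) ∘L .inr 𝕜 E₁ E₂).IsInvertible) (hzero : Φ (x₀, φ x₀) = 0)
    (huniq : ∀ᶠ v in 𝓝 (x₀, φ x₀), Φ v = 0 → v.2 = φ v.1) : ContDiffAt 𝕜 n φ x₀ := by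
  set ψ := hΦ.implicitFunction hn hinv
  have hψ : ContDiffAt 𝕜 n ψ x₀ := hΦ.contDiffAt_implicitFunction hn hinv
  have hψ₀ : ψ x₀ = φ x₀ := hΦ.implicitFunction_apply_self hn hinv
  have hlim : Tendsto (fun x ↦ (x, ψ x)) (𝓝 x₀) (𝓝 (x₀, φ x₀)) := by
    simpa only [hψ₀] using! (continuousAt_id.prodMk hψ.continuousAt).tendsto
  refine hψ.congr_of_eventuallyEq ?_
  filter_upwards [hlim.eventually huniq, hΦ.eventually_apply_implicitFunction hn hinv]
    with x hx hΦx
  exact (hx (hΦx.trans hzero)).symm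

theorem contDiffAt_of_eventually_unique_zero_real {n : WithTop ℕ∞} {Φ : ℝ × ℝ → ℝ} {φ : ℝ → ℝ}
    {x₀ c : ℝ} (hΦ : ContDiffAt ℝ n Φ (x₀, φ x₀)) (hn : n ≠ 0)
    (hderiv : HasDerivAt (fun y ↦ Φ (x₀, y)) c (φ x₀)) (hc : c ≠ 0) (hzero : Φ (x₀, φ x₀) = 0)
    (huniq : ∀ᶠ v in 𝓝 (x₀, φ x₀), Φ v = 0 → v.2 = φ v.1) : ContDiffAt ℝ n φ x₀ := by
  refine contDiffAt_of_eventually_unique_zero hΦ hn ?_ hzero huniq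
  have hpartial : fderiv ℝ Φ (x₀, φ x₀) ∘L .inr ℝ ℝ ℝ = .toSpanSingleton ℝ c :=
    ((hΦ.differentiableAt hn).hasFDerivAt.comp (φ x₀) (hasFDerivAt_prodMk_right x₀ (φ x₀))).unique
      hderiv.hasFDerivAt
  rw [hpartial]
  exact ⟨.unitsEquivAut ℝ (.mk0 c hc), by ext; simp⟩

end ImplicitFunction

theorem exists_zero_mem_Ioo_of_le_deriv {h : ℝ → ℝ} {σ ε c : ℝ} (hε : 0 < ε)
    (hcont : ContinuousOn h (Icc (σ - ε) (σ + ε)))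
    (hdiff : DifferentiableOn ℝ h (Ioo (σ - ε) (σ + ε)))
    (hderiv : ∀ x ∈ Ioo (σ - ε) (σ + ε), c ≤ deriv h x) (hσ : |h σ| < c * ε) :
    ∃ x ∈ Ioo (σ - ε) (σ + ε), h x = 0 := by
  have hgrowth := (convex_Icc (σ - ε) (σ + ε)).mul_sub_le_image_sub_of_le_deriv hcont
    (by simpa only [interior_Icc]) (by simpa only [interior_Icc])
  have hleft := hgrowth (σ - ε) (by constructor <;> linarith) σ (by constructor <;> linarith)
    (by linarith)
  have hright := hgrowth σ (by constructor <;> linarith) (σ + ε) (by constructor <;> linarith)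
    (by linarith)
  obtain ⟨hσ₁, hσ₂⟩ := abs_lt.1 hσ
  exact intermediate_value_Ioo (by linarith) hcont ⟨by linarith, by linarith⟩

section Families

variable {ι : Type*} {n : ℕ} {J : Set ℝ}

/-- The ring of families of `Cⁿ` functions on the line, indexed by `ι`, whose derivatives up to
order `n` are bounded on `J` uniformly in the index. Being a subring, it yields uniform bounds on
polynomial expressions without estimating their derivatives by hand. -/
def boundedSmoothFamilies (ι : Type*) (n : ℕ) (J : Set ℝ) : Subring (ι → ℝ → ℝ) where
  carrier := {g | (∀ i, ContDiff ℝ n (g i)) ∧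
    ∀ k ≤ n, ∃ A, ∀ i, ∀ x ∈ J, |iteratedDeriv k (g i) x| ≤ A}
  zero_mem' := ⟨fun _ ↦ contDiff_const, fun _ _ ↦ ⟨0, fun _ _ _ ↦ by simp⟩⟩
  one_mem' := ⟨fun _ ↦ contDiff_const, fun k _ ↦ ⟨1, fun _ _ _ ↦ by
    simp only [Pi.one_apply, Pi.one_def, iteratedDeriv_const]; split_ifs <;> simp⟩⟩
  neg_mem' := fun ⟨hg, hgA⟩ ↦ ⟨fun i ↦ (hg i).neg, by simpa using hgA⟩
  add_mem' := by
    rintro g h ⟨hg, hgA⟩ ⟨hh, hhA⟩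
    refine ⟨fun i ↦ (hg i).add (hh i), fun k hk ↦ ?_⟩
    obtain ⟨A, hA⟩ := hgA k hk
    obtain ⟨B, hB⟩ := hhA k hk
    refine ⟨A + B, fun i x hx ↦ ?_⟩
    rw [Pi.add_apply, iteratedDeriv_add ((hg i).of_le (mod_cast hk)).contDiffAt
      ((hh i).of_le (mod_cast hk)).contDiffAt]
    exact (abs_add_le _ _).trans (add_le_add (hA i x hx) (hB i x hx))
  mul_mem' := by
    rintro g h ⟨hg, hgA⟩ ⟨hh, hhA⟩
    refine ⟨fun i ↦ (hg i).mul (hh i), fun k hk ↦ ?_⟩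
    choose! A hA using hgA
    choose! B hB using hhA
    refine ⟨∑ j ∈ Finset.range (k + 1), k.choose j * A j * B (k - j), fun i x hx ↦ ?_⟩
    rw [Pi.mul_apply, iteratedDeriv_mul ((hg i).of_le (mod_cast hk)).contDiffAt
      ((hh i).of_le (mod_cast hk)).contDiffAt]
    refine (Finset.abs_sum_le_sum_abs _ _).trans (Finset.sum_le_sum fun j hj ↦ ?_)
    have hj : j ≤ k := Nat.lt_succ_iff.1 (Finset.mem_range.1 hj)
    rw [abs_mul, abs_mul, Nat.abs_cast]
    have hgj := hA j (hj.trans hk) i x hx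
    have hhj := hB (k - j) ((k.sub_le j).trans hk) i x hx
    have := (abs_nonneg _).trans hgj
    gcongr

theorem const_mem_boundedSmoothFamilies {c : ι → ℝ} (hc : ∃ A, ∀ i, |c i| ≤ A) :
    (fun i _ ↦ c i) ∈ boundedSmoothFamilies ι n J := by
  obtain ⟨A, hA⟩ := hc
  refine ⟨fun _ ↦ contDiff_const, fun k _ ↦ ⟨A, fun i _ _ ↦ ?_⟩⟩
  have := (abs_nonneg _).trans (hA i)
  rw [iteratedDeriv_const]
  split_ifs
  · exact hA i
  · simpa

theorem id_mem_boundedSmoothFamilies (hJ : Bornology.IsBounded J) :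
    (fun _ x ↦ x) ∈ boundedSmoothFamilies ι n J := by
  obtain ⟨R, hR⟩ := hJ.exists_norm_le
  refine ⟨fun _ ↦ contDiff_id, fun k _ ↦ ⟨max R 1, fun _ x hx ↦ ?_⟩⟩
  rw [iteratedDeriv_fun_id]
  split_ifs
  · exact (hR x hx).trans (le_max_left _ _)
  · simp
  · simp

theorem quadratic_mem_boundedSmoothFamilies {c₀ c₁ c₂ : ι → ℝ} (hJ : Bornology.IsBounded J)
    (h₀ : (fun i _ ↦ c₀ i) ∈ boundedSmoothFamilies ι n J)
    (h₁ : (fun i _ ↦ c₁ i) ∈ boundedSmoothFamilies ι n J)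
    (h₂ : (fun i _ ↦ c₂ i) ∈ boundedSmoothFamilies ι n J) :
    (fun i x ↦ c₀ i - c₁ i * x + c₂ i * x ^ 2) ∈ boundedSmoothFamilies ι n J :=
  have hX := id_mem_boundedSmoothFamilies hJ
  add_mem (sub_mem h₀ (mul_mem h₁ hX)) (mul_mem h₂ (pow_mem hX 2))

end Families

section LinearFixedPoint

variable {g p x : ℝ → ℝ} {ψ : ℝ}

theorem strictMonoOn_sub_mul_of_lt_deriv {S : Set ℝ} {a : ℝ} (hS : Convex ℝ S)
    (hcont : ContinuousOn g S) (hdiff : DifferentiableOn ℝ g (interior S))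
    (ha : ∀ z ∈ interior S, a < deriv g z) : StrictMonoOn (fun z ↦ g z - a * z) S := by
  refine strictMonoOn_of_deriv_pos hS (by fun_prop) fun z hz ↦ ?_
  have hg := (hdiff.differentiableAt (isOpen_interior.mem_nhds hz)).hasDerivAt
  rw [(hg.fun_sub ((hasDerivAt_id' z).const_mul a)).deriv, mul_one]
  exact sub_pos.2 (ha z hz)

theorem contDiffOn_of_eq_mul_of_lt_deriv {n : WithTop ℕ∞} {I S : Set ℝ} (hI : IsOpen I)
    (hSopen : IsOpen S) (hS : Convex ℝ S) (hn : n ≠ 0) (hg : ContDiffOn ℝ n g S)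
    (hp : ContDiffOn ℝ n p I) (hx : MapsTo x I S) (hlt : ∀ ψ ∈ I, ∀ z ∈ S, p ψ < deriv g z)
    (heq : ∀ ψ ∈ I, g (x ψ) = p ψ * x ψ) : ContDiffOn ℝ n x I := by
  intro ψ hψ
  have hgψ : ContDiffAt ℝ n g (x ψ) := hg.contDiffAt (hSopen.mem_nhds (hx hψ))
  have hpψ : ContDiffAt ℝ n p ψ := hp.contDiffAt (hI.mem_nhds hψ)
  have hΦ : ContDiffAt ℝ n (fun v : ℝ × ℝ ↦ g v.2 - p v.1 * v.2) (ψ, x ψ) :=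
    (hgψ.comp (ψ, x ψ) contDiffAt_snd).sub ((hpψ.comp (ψ, x ψ) contDiffAt_fst).mul contDiffAt_snd)
  have hderiv : HasDerivAt (fun z ↦ g z - p ψ * z) (deriv g (x ψ) - p ψ) (x ψ) := by
    simpa only [mul_one] using (hgψ.differentiableAt hn).hasDerivAt.fun_sub
      ((hasDerivAt_id' (x ψ)).const_mul (p ψ))
  refine (contDiffAt_of_eventually_unique_zero_real hΦ hn hderiv
    (sub_pos.2 (hlt ψ hψ _ (hx hψ))).ne' (sub_eq_zero.2 (heq ψ hψ)) ?_).contDiffWithinAt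
  filter_upwards [prod_mem_nhds (hI.mem_nhds hψ) (hSopen.mem_nhds (hx hψ))] with v ⟨hv₁, hv₂⟩ hv
  refine (strictMonoOn_sub_mul_of_lt_deriv hS hg.continuousOn
    ((hg.differentiableOn hn).mono interior_subset)
    fun z hz ↦ hlt v.1 hv₁ z (interior_subset hz)).injOn hv₂ (hx hv₁) ?_
  exact hv.trans (sub_eq_zero.2 (heq v.1 hv₁)).symm

theorem sub_mul_deriv_of_eq_mul (hg : DifferentiableAt ℝ g (x ψ)) (hp : DifferentiableAt ℝ p ψ)
    (hx : DifferentiableAt ℝ x ψ) (heq : ∀ᶠ φ in 𝓝 ψ, g (x φ) = p φ * x φ) :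
    (deriv g (x ψ) - p ψ) * deriv x ψ = deriv p ψ * x ψ := by
  have hleft : HasDerivAt (fun φ ↦ g (x φ)) (deriv g (x ψ) * deriv x ψ) ψ :=
    hg.hasDerivAt.comp ψ hx.hasDerivAt
  have hright := (hp.hasDerivAt.fun_mul hx.hasDerivAt).congr_of_eventuallyEq heq
  linear_combination hleft.unique hright

theorem sub_mul_deriv_deriv_of_eq_mul (hg : ContDiffAt ℝ 2 g (x ψ)) (hp : ContDiffAt ℝ 2 p ψ)
    (hx : ContDiffAt ℝ 2 x ψ) (heq : ∀ᶠ φ in 𝓝 ψ, g (x φ) = p φ * x φ) :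
    (deriv g (x ψ) - p ψ) * deriv (deriv x) ψ =
      deriv (deriv p) ψ * x ψ + 2 * deriv p ψ * deriv x ψ
        - deriv (deriv g) (x ψ) * deriv x ψ ^ 2 := by
  have hfirst : ∀ᶠ φ in 𝓝 ψ, (deriv g (x φ) - p φ) * deriv x φ = deriv p φ * x φ := by
    filter_upwards [heq.eventually_nhds,
      hx.continuousAt.eventually (hg.eventually (by simp)), hp.eventually (by simp),
      hx.eventually (by simp)] with φ heqφ hgφ hpφ hxφ
    exact sub_mul_deriv_of_eq_mul (hgφ.differentiableAt two_ne_zero)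
      (hpφ.differentiableAt two_ne_zero) (hxφ.differentiableAt two_ne_zero) heqφ
  have hasDeriv {f : ℝ → ℝ} {a : ℝ} (hf : ContDiffAt ℝ 2 f a) : HasDerivAt f (deriv f a) a :=
    (hf.differentiableAt two_ne_zero).hasDerivAt
  have hasDeriv' {f : ℝ → ℝ} {a : ℝ} (hf : ContDiffAt ℝ 2 f a) :
      HasDerivAt (deriv f) (deriv (deriv f) a) a :=
    ((hf.derivWithin (m := 1) (by norm_num)).differentiableAt one_ne_zero).hasDerivAt
  have hcomp : HasDerivAt (fun φ ↦ deriv g (x φ)) (deriv (deriv g) (x ψ) * deriv x ψ) ψ :=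
    (hasDeriv' hg).comp ψ (hasDeriv hx)
  have hleft := (hcomp.fun_sub (hasDeriv hp)).fun_mul (hasDeriv' hx)
  have hright := ((hasDeriv' hp).fun_mul (hasDeriv hx)).congr_of_eventuallyEq hfirst
  linear_combination hleft.unique hright

theorem abs_deriv_deriv_le_of_eq_mul {A c N R : ℝ} (hg : ContDiffAt ℝ 2 g (x ψ))
    (hp : ContDiffAt ℝ 2 p ψ) (hx : ContDiffAt ℝ 2 x ψ)
    (heq : ∀ᶠ φ in 𝓝 ψ, g (x φ) = p φ * x φ) (hc : 0 < c) (hgap : c ≤ deriv g (x ψ) - p ψ)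
    (hxR : |x ψ| ≤ R) (hp₁ : |deriv p ψ| ≤ A) (hp₂ : |deriv (deriv p) ψ| ≤ A)
    (hg₂ : |deriv (deriv g) (x ψ)| ≤ N) :
    |deriv (deriv x) ψ| ≤ (A * R + 2 * A * (A * R / c) + N * (A * R / c) ^ 2) / c := by
  have hA : 0 ≤ A := (abs_nonneg _).trans hp₁
  have hcancel (v : ℝ) : |v| * c ≤ |(deriv g (x ψ) - p ψ) * v| := by
    rw [abs_mul, mul_comm]
    exact mul_le_mul_of_nonneg_right (hgap.trans (le_abs_self _)) (abs_nonneg v)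
  have hx₁ : |deriv x ψ| ≤ A * R / c := by
    rw [le_div_iff₀ hc]
    refine (hcancel _).trans ?_
    rw [sub_mul_deriv_of_eq_mul (hg.differentiableAt two_ne_zero) (hp.differentiableAt two_ne_zero)
      (hx.differentiableAt two_ne_zero) heq, abs_mul]
    gcongr
  rw [le_div_iff₀ hc]
  refine (hcancel _).trans ?_
  rw [sub_mul_deriv_deriv_of_eq_mul hg hp hx heq]
  calc |deriv (deriv p) ψ * x ψ + 2 * deriv p ψ * deriv x ψ - deriv (deriv g) (x ψ) * deriv x ψ ^ 2|
      ≤ |deriv (deriv p) ψ * x ψ| + |2 * deriv p ψ * deriv x ψ|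
          + |deriv (deriv g) (x ψ) * deriv x ψ ^ 2| :=
        (abs_sub _ _).trans (add_le_add_left (abs_add_le _ _) _)
    _ = |deriv (deriv p) ψ| * |x ψ| + 2 * |deriv p ψ| * |deriv x ψ|
          + |deriv (deriv g) (x ψ)| * |deriv x ψ| ^ 2 := by
        simp only [abs_mul, abs_pow, Nat.abs_ofNat]
    _ ≤ A * R + 2 * A * (A * R / c) + N * (A * R / c) ^ 2 := by
        have := (abs_nonneg _).trans hg₂
        gcongr

end LinearFixedPoint

section Penalty

/-- A `C⁴` function `F` whose derivative vanishes at an interior point `σ` of `[0, K]`, at distance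
at least `ε` from both endpoints, with `F'' ≥ m` and `|F'''| ≤ N` inside. It abstracts the penalty
`ς ↦ f(t,s,y;ς)` at a fixed `(t,s,y)`; keeping the constants as parameters is what makes the
statements below uniform in `(t,s,y)`. -/
structure IsPenalty (K ε m N σ : ℝ) (F : ℝ → ℝ) : Prop where
  contDiff : ContDiff ℝ 4 F
  le_vertex : ε ≤ σ
  vertex_le : σ ≤ K - ε
  deriv_vertex : deriv F σ = 0
  le_deriv_deriv : ∀ z ∈ Ioo 0 K, m ≤ deriv (deriv F) z
  abs_deriv_deriv_deriv_le : ∀ z ∈ Ioo 0 K, |deriv (deriv (deriv F)) z| ≤ N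

variable {K ε m N σ a z : ℝ} {F : ℝ → ℝ}

namespace IsPenalty

theorem contDiff_deriv (hF : IsPenalty K ε m N σ F) : ContDiff ℝ 3 (deriv F) :=
  hF.contDiff.iterate_deriv' 3 1

theorem vertex_mem (hF : IsPenalty K ε m N σ F) (hε : 0 < ε) : σ ∈ Ioo 0 K :=
  ⟨by linarith [hF.le_vertex], by linarith [hF.vertex_le]⟩

theorem strictMonoOn_deriv_sub_mul (hF : IsPenalty K ε m N σ F) (ha : a < m) :
    StrictMonoOn (fun z ↦ deriv F z - a * z) (Icc 0 K) := by
  refine strictMonoOn_sub_mul_of_lt_deriv (convex_Icc 0 K) hF.contDiff_deriv.continuous.continuousOn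
    (hF.contDiff_deriv.differentiable (by simp)).differentiableOn fun z hz ↦ ?_
  exact ha.trans_le (hF.le_deriv_deriv z (interior_Icc (a := (0 : ℝ)) ▸ hz))

theorem lt_half_of_abs_mul_lt (hF : IsPenalty K ε m N σ F) (hε : 0 < ε) (hm : 0 < m)
    (ha : |a| * K < m / 2 * ε) : a < m / 2 := by
  have hεK : ε < K := by linarith [hF.le_vertex, hF.vertex_le]
  exact (le_abs_self a).trans_lt <| lt_of_mul_lt_mul_right
    (ha.trans (mul_lt_mul_of_pos_left hεK (half_pos hm))) (hε.trans hεK).le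

theorem exists_deriv_eq_mul (hF : IsPenalty K ε m N σ F) (hε : 0 < ε) (hm : 0 < m)
    (ha : |a| * K < m / 2 * ε) : ∃ z ∈ Ioo 0 K, deriv F z = a * z := by
  have hsub : Ioo (σ - ε) (σ + ε) ⊆ Ioo 0 K :=
    Ioo_subset_Ioo (by linarith [hF.le_vertex]) (by linarith [hF.vertex_le])
  have hF' : Differentiable ℝ (deriv F) := hF.contDiff_deriv.differentiable (by simp)
  obtain ⟨hσ₀, hσK⟩ := hF.vertex_mem hε
  have hderiv : ∀ z ∈ Ioo (σ - ε) (σ + ε), m / 2 ≤ deriv (fun z ↦ deriv F z - a * z) z := by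
    intro z hz
    rw [((hF' z).hasDerivAt.fun_sub ((hasDerivAt_id' z).const_mul a)).deriv]
    linarith [hF.le_deriv_deriv z (hsub hz), hF.lt_half_of_abs_mul_lt hε hm ha]
  have hvertex : |deriv F σ - a * σ| < m / 2 * ε := by
    rw [hF.deriv_vertex, zero_sub, abs_neg, abs_mul, abs_of_pos hσ₀]
    exact (mul_le_mul_of_nonneg_left hσK.le (abs_nonneg a)).trans_lt ha
  obtain ⟨z, hz, hz₀⟩ := exists_zero_mem_Ioo_of_le_deriv hε
    (hF'.continuous.sub (by fun_prop)).continuousOn (by fun_prop) hderiv hvertex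
  exact ⟨z, hsub hz, sub_eq_zero.1 hz₀⟩

theorem isMinOn_sub_sq (hF : IsPenalty K ε m N σ F) (ha : a < m) (hz : z ∈ Ioo 0 K)
    (heq : deriv F z = a * z) : IsMinOn (fun ς ↦ F ς - a * ς ^ 2 / 2) (Icc 0 K) z := by
  have hderiv (ς : ℝ) : HasDerivAt (fun ς ↦ F ς - a * ς ^ 2 / 2) (deriv F ς - a * ς) ς := by
    refine ((hF.contDiff.differentiable (by simp) ς).hasDerivAt.fun_sub
      (((hasDerivAt_pow 2 ς).const_mul a).div_const 2)).congr_deriv ?_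
    push_cast
    ring
  have hmono := (hF.strictMonoOn_deriv_sub_mul ha).monotoneOn
  have hdiff : Differentiable ℝ fun ς ↦ F ς - a * ς ^ 2 / 2 := fun ς ↦ (hderiv ς).differentiableAt
  have hz' := Ioo_subset_Icc_self hz
  refine isMinOn_Icc_of_deriv hdiff.continuous.continuousAt hdiff.continuous.continuousAt
    hdiff.continuous.continuousAt hdiff.differentiableOn hdiff.differentiableOn
    (fun ς hς ↦ ?_) fun ς hς ↦ ?_ <;> rw [(hderiv ς).deriv]
  · exact (hmono ⟨hς.1.le, hς.2.le.trans hz.2.le⟩ hz' hς.2.le).trans_eq (sub_eq_zero.2 heq)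
  · exact (sub_eq_zero.2 heq).symm.trans_le (hmono hz' ⟨hz.1.le.trans hς.1.le, hς.2.le⟩ hς.1.le)

theorem exists_smooth_minimizer (hF : IsPenalty K ε m N σ F) (hε : 0 < ε) (hm : 0 < m) {A : ℝ}
    {p : ℝ → ℝ} {I : Set ℝ} (hI : IsOpen I) (hI₀ : 0 ∈ I) (hp : ContDiff ℝ 3 p) (hp₀ : p 0 = 0)
    (hpK : ∀ ψ ∈ I, |p ψ| * K < m / 2 * ε) (hp₁ : ∀ ψ ∈ I, |deriv p ψ| ≤ A)
    (hp₂ : ∀ ψ ∈ I, |deriv (deriv p) ψ| ≤ A) :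
    ∃ x : ℝ → ℝ, MapsTo x I (Ioo 0 K) ∧ ContDiffOn ℝ 3 x I ∧ x 0 = σ ∧
      HasDerivAt x (deriv p 0 * σ / deriv (deriv F) σ) 0 ∧
      (∀ ψ ∈ I, |deriv (deriv x) ψ| ≤
        (A * K + 2 * A * (A * K / (m / 2)) + N * (A * K / (m / 2)) ^ 2) / (m / 2)) ∧
      (∀ ψ ∈ I, deriv F (x ψ) = p ψ * x ψ) ∧
      ∀ ψ ∈ I, IsMinOn (fun ς ↦ F ς - p ψ * ς ^ 2 / 2) (Icc 0 K) (x ψ) := by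
  have hσ := hF.vertex_mem hε
  have hpm : ∀ ψ ∈ I, p ψ < m / 2 := fun ψ hψ ↦ hF.lt_half_of_abs_mul_lt hε hm (hpK ψ hψ)
  have hpm' : ∀ ψ ∈ I, p ψ < m := fun ψ hψ ↦ (hpm ψ hψ).trans (half_lt_self hm)
  choose! x hxK hx using fun ψ hψ ↦ hF.exists_deriv_eq_mul hε hm (hpK ψ hψ)
  have hx₀ : x 0 = σ := by
    refine (hF.strictMonoOn_deriv_sub_mul hm).injOn (Ioo_subset_Icc_self (hxK 0 hI₀))
      (Ioo_subset_Icc_self hσ) ?_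
    simp only [zero_mul, sub_zero, hx 0 hI₀, hp₀, hF.deriv_vertex]
  have hcont : ContDiffOn ℝ 3 x I :=
    contDiffOn_of_eq_mul_of_lt_deriv hI isOpen_Ioo (convex_Ioo 0 K) (by simp)
      hF.contDiff_deriv.contDiffOn hp.contDiffOn hxK
      (fun ψ hψ z hz ↦ (hpm' ψ hψ).trans_le (hF.le_deriv_deriv z hz)) hx
  have hcontAt : ∀ ψ ∈ I, ContDiffAt ℝ 3 x ψ := fun ψ hψ ↦ hcont.contDiffAt (hI.mem_nhds hψ)
  have hev : ∀ ψ ∈ I, ∀ᶠ φ in 𝓝 ψ, deriv F (x φ) = p φ * x φ := fun ψ hψ ↦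
    (hI.eventually_mem hψ).mono hx
  refine ⟨x, hxK, hcont, hx₀, ?_, fun ψ hψ ↦ ?_, hx, fun ψ hψ ↦
    hF.isMinOn_sub_sq (hpm' ψ hψ) (hxK ψ hψ) (hx ψ hψ)⟩
  · have hdiff := (hcontAt 0 hI₀).differentiableAt (by simp)
    have hderiv := sub_mul_deriv_of_eq_mul (hF.contDiff_deriv.differentiable (by simp) _)
      (hp.differentiable (by simp) _) hdiff (hev 0 hI₀)
    have hpos := hm.trans_le (hF.le_deriv_deriv σ hσ)
    rw [hx₀, hp₀, sub_zero] at hderiv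
    exact hdiff.hasDerivAt.congr_deriv (eq_div_of_mul_eq hpos.ne' ((mul_comm _ _).trans hderiv))
  · have hgap : m / 2 ≤ deriv (deriv F) (x ψ) - p ψ := by
      linarith [hF.le_deriv_deriv _ (hxK ψ hψ), hpm ψ hψ]
    have hxabs : |x ψ| ≤ K := (abs_of_pos (hxK ψ hψ).1).trans_le (hxK ψ hψ).2.le
    exact abs_deriv_deriv_le_of_eq_mul (hF.contDiff_deriv.contDiffAt.of_le (by norm_num))
      (hp.contDiffAt.of_le (by norm_num)) ((hcontAt ψ hψ).of_le (by norm_num)) (hev ψ hψ)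
      (half_pos hm) hgap hxabs (hp₁ ψ hψ) (hp₂ ψ hψ) (hF.abs_deriv_deriv_deriv_le _ (hxK ψ hψ))

end IsPenalty

end Penalty

section UniformFamilies

variable {ι : Type*} {r : ℝ} {p : ι → ℝ → ℝ}

theorem exists_abs_lt_of_mem_boundedSmoothFamilies {n : ℕ} {η : ℝ} (hn : 1 ≤ n) (hr : 0 < r)
    (hp : p ∈ boundedSmoothFamilies ι n (Icc (-r) r)) (hp₀ : ∀ i, p i 0 = 0) (hη : 0 < η) :
    ∃ δ ∈ Ioc 0 r, ∀ i, ∀ ψ ∈ Ioo (-δ) δ, |p i ψ| < η := by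
  obtain ⟨A, hA⟩ := hp.2 1 hn
  have hA' : 0 < |A| + 1 := by positivity
  refine ⟨min r (η / (|A| + 1)), ⟨by positivity, min_le_left _ _⟩, fun i ψ hψ ↦ ?_⟩
  have hdiff : Differentiable ℝ (p i) := (hp.1 i).differentiable (mod_cast (by omega))
  have hψ' : |ψ| < min r (η / (|A| + 1)) := abs_lt.2 hψ
  have hgrowth : |p i ψ - p i 0| ≤ A * |ψ - 0| :=
    (convex_Icc (-r) r).norm_image_sub_le_of_norm_deriv_le (fun z _ ↦ hdiff z)
      (fun z hz ↦ by simpa only [iteratedDeriv_one, Real.norm_eq_abs] using hA i z hz)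
      (by constructor <;> linarith) (abs_le.1 (hψ'.le.trans (min_le_left _ _)))
  rw [hp₀, sub_zero, sub_zero] at hgrowth
  calc |p i ψ| ≤ A * |ψ| := hgrowth
    _ ≤ (|A| + 1) * |ψ| := by gcongr; linarith [le_abs_self A]
    _ < η := (lt_div_iff₀' hA').1 (hψ'.trans_le (min_le_right _ _))

theorem exists_uniform_smooth_minimizer {K ε m N : ℝ} {F : ι → ℝ → ℝ} {σ : ι → ℝ}
    (hF : ∀ i, IsPenalty K ε m N (σ i) (F i)) (hK : 0 < K) (hε : 0 < ε) (hm : 0 < m) (hr : 0 < r)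
    (hp : p ∈ boundedSmoothFamilies ι 3 (Icc (-r) r)) (hp₀ : ∀ i, p i 0 = 0) :
    ∃ δ > 0, ∃ M, ∀ i, ∃ x : ℝ → ℝ, MapsTo x (Ioo (-δ) δ) (Ioo 0 K) ∧
      ContDiffOn ℝ 3 x (Ioo (-δ) δ) ∧ x 0 = σ i ∧
      HasDerivAt x (deriv (p i) 0 * σ i / deriv (deriv (F i)) (σ i)) 0 ∧
      (∀ ψ ∈ Ioo (-δ) δ, |deriv (deriv x) ψ| ≤ M) ∧
      (∀ ψ ∈ Ioo (-δ) δ, deriv (F i) (x ψ) = p i ψ * x ψ) ∧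
      ∀ ψ ∈ Ioo (-δ) δ, IsMinOn (fun ς ↦ F i ς - p i ψ * ς ^ 2 / 2) (Icc 0 K) (x ψ) := by
  obtain ⟨δ, ⟨hδ, hδr⟩, hsmall⟩ := exists_abs_lt_of_mem_boundedSmoothFamilies (by simp) hr hp hp₀
    (show 0 < m / 2 * ε / K by positivity)
  obtain ⟨A₁, hA₁⟩ := hp.2 1 (by simp)
  obtain ⟨A₂, hA₂⟩ := hp.2 2 (by simp)
  simp only [iteratedDeriv_succ, iteratedDeriv_zero] at hA₁ hA₂
  have hmem {ψ : ℝ} (hψ : ψ ∈ Ioo (-δ) δ) : ψ ∈ Icc (-r) r :=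
    ⟨by linarith [hψ.1], by linarith [hψ.2]⟩
  exact ⟨δ, hδ, _, fun i ↦ (hF i).exists_smooth_minimizer hε hm isOpen_Ioo (by simpa) (hp.1 i)
    (hp₀ i) (fun ψ hψ ↦ (lt_div_iff₀ hK).1 (hsmall i ψ hψ))
    (fun ψ hψ ↦ (hA₁ i ψ (hmem hψ)).trans (le_max_left A₁ A₂))
    (fun ψ hψ ↦ (hA₂ i ψ (hmem hψ)).trans (le_max_right A₁ A₂))⟩

end UniformFamilies

theorem contDiff_succ_of_hasDerivAt {f f' : ℝ → ℝ} {n : ℕ} (hf : ∀ x, HasDerivAt f (f' x) x)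
    (hf' : ContDiff ℝ n f') : ContDiff ℝ (n + 1) f := by
  rw [contDiff_succ_iff_deriv, funext fun x ↦ (hf x).deriv]
  exact ⟨fun x ↦ (hf x).differentiableAt, by simp, hf'⟩

namespace HedgeData

/-- The open domain `D = (0,T) × (1/K,K) × (y_l,y_u)`. -/
def domain (d : HedgeData) : Set (ℝ × ℝ × ℝ) := Ioo 0 d.T ×ˢ Ioo d.K⁻¹ d.K ×ˢ Ioo d.yl d.yu

/-- Boundedness on `D` of a function of `(t,s,y)`. -/
def BddOnDomain (d : HedgeData) (g : ℝ → ℝ → ℝ → ℝ) : Prop :=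
  ∃ C, ∀ t s y, (t, s, y) ∈ d.domain → |g t s y| ≤ C

/-- A parameter `(t,s,y,ϑ) ∈ D × [-L,L]`: the index over which all estimates are uniform. -/
structure Param (d : HedgeData) (L : ℝ) where
  t : ℝ
  s : ℝ
  y : ℝ
  ϑ : ℝ
  mem_domain : (t, s, y) ∈ d.domain
  mem_Icc : ϑ ∈ Icc (-L) L

/-- The conditions under which the worst-case volatility is a smooth function of `ψ`. Bounding the
utility through `U''/U'` and `U'''/U'` makes them invariant under positive affine changes of `U`,
which leave the minimiser unchanged. -/
structure RegularityAssumptions (d : HedgeData) : Prop where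
  hK : 0 < d.K
  heps : 0 < d.eps
  sb_mem : ∀ t ∈ Ioo 0 d.T, ∀ s ∈ Ioo d.K⁻¹ d.K, d.sb t s ∈ Icc d.eps (d.K - d.eps)
  V_deriv : ∀ t ∈ Ioo 0 d.T, ∀ s ∈ Ioo d.K⁻¹ d.K,
    HasDerivAt (d.V t) (d.Vs t s) s ∧ HasDerivAt (d.Vs t) (d.Vss t s) s
  Vss_bdd : ∃ C, ∀ t ∈ Ioo 0 d.T, ∀ s ∈ Ioo d.K⁻¹ d.K, |s ^ 2 * d.Vss t s| ≤ C
  f_deriv : ∀ t s y, (t, s, y) ∈ d.domain → ∀ ς,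
    HasDerivAt (d.f t s y) (d.f1 t s y ς) ς ∧ HasDerivAt (d.f1 t s y) (d.f2 t s y ς) ς ∧
    HasDerivAt (d.f2 t s y) (d.f3 t s y ς) ς ∧ HasDerivAt (d.f3 t s y) (d.f4 t s y ς) ς
  f4_cont : ∀ t s y, (t, s, y) ∈ d.domain → Continuous (d.f4 t s y)
  f1_sb : ∀ t s y, (t, s, y) ∈ d.domain → d.f1 t s y (d.sb t s) = 0
  f2_lb : ∃ m > 0, ∀ t s y, (t, s, y) ∈ d.domain → ∀ ς ∈ Ioo 0 d.K, m ≤ d.f2 t s y ς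
  f3_bdd : ∃ N, ∀ t s y, (t, s, y) ∈ d.domain → ∀ ς ∈ Ioo 0 d.K, |d.f3 t s y ς| ≤ N
  U_deriv : ∀ y, HasDerivAt d.U (d.U1 y) y ∧ HasDerivAt d.U1 (d.U2 y) y ∧
    HasDerivAt d.U2 (d.U3 y) y
  U1_pos : ∀ y, 0 < d.U1 y
  U_ratio_bdd : ∀ g ∈ [d.U2, d.U3], ∃ C, ∀ y ∈ Ioo d.yl d.yu, |g y / d.U1 y| ≤ C
  wt_deriv : ∀ t s y, (t, s, y) ∈ d.domain →
    HasDerivAt (fun s' ↦ d.wt t s' y) (d.wtS t s y) s ∧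
    HasDerivAt (fun y' ↦ d.wt t s y') (d.wtY t s y) y ∧
    HasDerivAt (fun s' ↦ d.wtS t s' y) (d.wtSS t s y) s ∧
    HasDerivAt (fun y' ↦ d.wtS t s y') (d.wtSY t s y) y ∧
    HasDerivAt (fun y' ↦ d.wtY t s y') (d.wtYY t s y) y
  wh_deriv : ∀ t s y, (t, s, y) ∈ d.domain →
    HasDerivAt (fun s' ↦ d.wh t s' y) (d.whS t s y) s ∧
    HasDerivAt (fun y' ↦ d.wh t s y') (d.whY t s y) y ∧
    HasDerivAt (fun s' ↦ d.whS t s' y) (d.whSS t s y) s ∧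
    HasDerivAt (fun y' ↦ d.whS t s y') (d.whSY t s y) y ∧
    HasDerivAt (fun y' ↦ d.whY t s y') (d.whYY t s y) y
  wt_bdd : ∀ g ∈ [d.wt, d.wtS, d.wtY, d.wtSS, d.wtSY, d.wtYY], d.BddOnDomain g
  wh_bdd : ∀ g ∈ [d.wh, d.whS, d.whY, d.whSS, d.whSY, d.whYY], d.BddOnDomain g

theorem bddOnDomain_of_continuousOn {d : HedgeData} {g : ℝ → ℝ → ℝ → ℝ}
    (hg : ContinuousOn (fun p : ℝ × ℝ × ℝ ↦ g p.1 p.2.1 p.2.2)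
      (Icc 0 d.T ×ˢ Icc d.K⁻¹ d.K ×ˢ Icc d.yl d.yu)) :
    d.BddOnDomain g := by
  obtain ⟨C, hC⟩ := (isCompact_Icc.prod (isCompact_Icc.prod
    isCompact_Icc)).exists_bound_of_continuousOn hg
  exact ⟨C, fun t s y ⟨ht, hs, hy⟩ ↦ hC (t, s, y)
    ⟨Ioo_subset_Icc_self ht, Ioo_subset_Icc_self hs, Ioo_subset_Icc_self hy⟩⟩

theorem Assumptions.regularityAssumptions {d : HedgeData} (hd : d.Assumptions) :
    d.RegularityAssumptions where
  hK := one_pos.trans hd.hK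
  heps := hd.heps
  sb_mem t ht s hs := ⟨hd.sb_lb t (Ioo_subset_Icc_self ht) s hs,
    hd.sb_ub t (Ioo_subset_Icc_self ht) s hs⟩
  V_deriv t ht s hs := ⟨hd.V_derivS t ht s hs, hd.V_derivSS t ht s hs⟩
  Vss_bdd := ⟨d.K, hd.Vss_bdd⟩
  f_deriv t s y _ ς :=
    ⟨hd.f_deriv1 t s y ς, hd.f_deriv2 t s y ς, hd.f_deriv3 t s y ς, hd.f_deriv4 t s y ς⟩
  f4_cont t s y _ := hd.f4_cont t s y
  f1_sb := fun t s y ⟨ht, hs, hy⟩ ↦ (hd.f_min t ht s hs y hy).2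
  f2_lb := ⟨1 / d.K, one_div_pos.2 (one_pos.trans hd.hK), fun t s y ⟨ht, hs, hy⟩ ς hς ↦
    (hd.f2_bdd t ht s hs y hy ς (Ioo_subset_Icc_self hς)).1⟩
  f3_bdd := ⟨d.K, fun t s y ⟨ht, hs, hy⟩ ς hς ↦
    (hd.f34_bdd t ht s hs y hy ς (Ioo_subset_Icc_self hς)).1⟩
  U_deriv y := ⟨hd.U_deriv1 y, hd.U_deriv2 y, hd.U_deriv3 y⟩
  U1_pos := hd.U1_pos
  U_ratio_bdd := by
    have hU₁ : Continuous d.U1 := continuous_iff_continuousAt.2 fun y ↦ (hd.U_deriv2 y).continuousAt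
    have hU₂ : Continuous d.U2 := continuous_iff_continuousAt.2 fun y ↦ (hd.U_deriv3 y).continuousAt
    suffices ∀ g : ℝ → ℝ, Continuous g → ∃ C, ∀ y ∈ Ioo d.yl d.yu, |g y / d.U1 y| ≤ C by
      exact List.forall_mem_cons.2 ⟨this _ hU₂, List.forall_mem_singleton.2 (this _ hd.U3_cont)⟩
    intro g hg
    obtain ⟨C, hC⟩ := (isCompact_Icc (a := d.yl) (b := d.yu)).exists_bound_of_continuousOn
      (hg.div hU₁ fun y ↦ (hd.U1_pos y).ne').continuousOn
    exact ⟨C, fun y hy ↦ hC y (Ioo_subset_Icc_self hy)⟩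
  wt_deriv := fun t s y ⟨ht, hs, hy⟩ ↦ (hd.wt_deriv t ht s hs y hy).2
  wh_deriv := fun t s y ⟨ht, hs, hy⟩ ↦ (hd.wh_deriv t ht s hs y hy).2
  wt_bdd := List.forall_mem_cons.2 ⟨bddOnDomain_of_continuousOn hd.wt_cont, fun g hg ↦
    ⟨d.K, fun t s y ⟨ht, hs, hy⟩ ↦ hd.wt_bdd g (List.mem_cons_of_mem _ hg) t ht s hs y hy⟩⟩
  wh_bdd := List.forall_mem_cons.2 ⟨bddOnDomain_of_continuousOn hd.wh_cont, fun g hg ↦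
    ⟨d.K, fun t s y ⟨ht, hs, hy⟩ ↦ hd.wh_bdd g (List.mem_cons_of_mem _ hg) t ht s hs y hy⟩⟩

variable {d : HedgeData} {L : ℝ}

theorem RegularityAssumptions.deriv_f_eq (hd : d.RegularityAssumptions) {t s y : ℝ}
    (h : (t, s, y) ∈ d.domain) : deriv (d.f t s y) = d.f1 t s y ∧
      deriv (d.f1 t s y) = d.f2 t s y ∧ deriv (d.f2 t s y) = d.f3 t s y :=
  have hf := hd.f_deriv t s y h
  ⟨funext fun ς ↦ (hf ς).1.deriv, funext fun ς ↦ (hf ς).2.1.deriv,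
    funext fun ς ↦ (hf ς).2.2.1.deriv⟩

theorem RegularityAssumptions.isPenalty (hd : d.RegularityAssumptions) {m N : ℝ}
    (hm : ∀ t s y, (t, s, y) ∈ d.domain → ∀ ς ∈ Ioo 0 d.K, m ≤ d.f2 t s y ς)
    (hN : ∀ t s y, (t, s, y) ∈ d.domain → ∀ ς ∈ Ioo 0 d.K, |d.f3 t s y ς| ≤ N)
    {t s y : ℝ} (h : (t, s, y) ∈ d.domain) :
    IsPenalty d.K d.eps m N (d.sb t s) (d.f t s y) := by
  have hf := hd.f_deriv t s y h
  obtain ⟨hf₁, hf₂, hf₃⟩ := hd.deriv_f_eq h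
  refine ⟨?_, (hd.sb_mem t h.1 s h.2.1).1, (hd.sb_mem t h.1 s h.2.1).2, ?_, ?_, ?_⟩
  · exact contDiff_succ_of_hasDerivAt (n := 3) (fun ς ↦ (hf ς).1) <|
      contDiff_succ_of_hasDerivAt (n := 2) (fun ς ↦ (hf ς).2.1) <|
      contDiff_succ_of_hasDerivAt (n := 1) (fun ς ↦ (hf ς).2.2.1) <|
      contDiff_succ_of_hasDerivAt (n := 0) (fun ς ↦ (hf ς).2.2.2) <|
      contDiff_zero.2 (hd.f4_cont t s y h)
  · rw [hf₁, hd.f1_sb t s y h]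
  · simpa only [hf₁, hf₂] using hm t s y h
  · simpa only [hf₁, hf₂, hf₃] using hN t s y h

/-- The coefficient `p(ψ)` for which the first-order condition for `ς`, divided by `U'(y)`, reads
`f'(t,s,y;ς) = p(ψ) ς`; here `ϑ` is the rescaled deviation of the strategy from `V̄_s`. -/
noncomputable def tilt (d : HedgeData) (t s y ϑ ψ : ℝ) : ℝ :=
  ψ * ((s ^ 2 * d.Vss t s * d.wPsiY ψ t s y - s ^ 2 * (d.wPsiSS ψ t s y
    + 2 * ϑ * ψ * d.wPsiSY ψ t s y + ϑ ^ 2 * ψ ^ 2 * d.wPsiYY ψ t s y)) / d.U1 y)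

theorem tilt_zero (t s y ϑ : ℝ) : d.tilt t s y ϑ 0 = 0 := zero_mul _

theorem deriv_tilt_zero {t s y : ℝ} (ϑ : ℝ) (hU : d.U1 y ≠ 0) :
    deriv (d.tilt t s y ϑ) 0 = s ^ 2 * d.Vss t s := by
  have hslope : DifferentiableAt ℝ (fun ψ ↦ (s ^ 2 * d.Vss t s * d.wPsiY ψ t s y
      - s ^ 2 * (d.wPsiSS ψ t s y + 2 * ϑ * ψ * d.wPsiSY ψ t s y
        + ϑ ^ 2 * ψ ^ 2 * d.wPsiYY ψ t s y)) / d.U1 y) 0 := by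
    unfold wPsiY wPsiSS wPsiSY wPsiYY
    fun_prop
  refine ((hasDerivAt_id' 0).mul hslope.hasDerivAt).deriv.trans ?_
  simp only [wPsiY, wPsiSS]
  field_simp
  ring

theorem foc_eq_zero_iff {t s y ϑ ψ ς : ℝ} (hU : d.U1 y ≠ 0) :
    d.U1 y * d.f1 t s y ς - s ^ 2 * d.Vss t s * ς * d.wPsiY ψ t s y * ψ
        + ς * s ^ 2 * (d.wPsiSS ψ t s y + 2 * ϑ * ψ * d.wPsiSY ψ t s y
          + ϑ ^ 2 * ψ ^ 2 * d.wPsiYY ψ t s y) * ψ = 0 ↔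
      d.f1 t s y ς = d.tilt t s y ϑ ψ * ς := by
  have hfactor : d.U1 y * d.f1 t s y ς - s ^ 2 * d.Vss t s * ς * d.wPsiY ψ t s y * ψ
      + ς * s ^ 2 * (d.wPsiSS ψ t s y + 2 * ϑ * ψ * d.wPsiSY ψ t s y
        + ϑ ^ 2 * ψ ^ 2 * d.wPsiYY ψ t s y) * ψ =
      d.U1 y * (d.f1 t s y ς - d.tilt t s y ϑ ψ * ς) := by
    rw [tilt]
    field_simp
    ring
  rw [hfactor, mul_eq_zero_iff_left hU, sub_eq_zero]

theorem ham_eq {t s y ϑ ψ ς : ℝ} (hU : d.U1 y ≠ 0) (hψ : ψ ≠ 0) :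
    d.Ham ψ t s y (d.Vs t s + ϑ * ψ) ς =
      d.U1 y / ψ * (d.f t s y ς - d.tilt t s y ϑ ψ * ς ^ 2 / 2)
        + s ^ 2 * d.Vss t s * d.sb t s ^ 2 * d.wPsiY ψ t s y / 2 := by
  rw [Ham, tilt]
  field_simp
  ring

theorem isMinOn_ham {t s y ϑ ψ ς : ℝ} {S : Set ℝ} (hU : 0 < d.U1 y) (hψ : 0 < ψ)
    (hmin : IsMinOn (fun ς ↦ d.f t s y ς - d.tilt t s y ϑ ψ * ς ^ 2 / 2) S ς) :
    IsMinOn (fun ς ↦ d.Ham ψ t s y (d.Vs t s + ϑ * ψ) ς) S ς := by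
  intro z hz
  have := hmin hz
  simp only [mem_ofPred_eq, ham_eq hU.ne' hψ.ne'] at this ⊢
  gcongr

section TiltBounds

variable {n : ℕ} {J : Set ℝ}

theorem BddOnDomain.const_mem {g : ℝ → ℝ → ℝ → ℝ} (hg : d.BddOnDomain g) :
    (fun (P : d.Param L) _ ↦ g P.t P.s P.y) ∈ boundedSmoothFamilies (d.Param L) n J := by
  obtain ⟨C, hC⟩ := hg
  exact const_mem_boundedSmoothFamilies ⟨C, fun P ↦ hC P.t P.s P.y P.mem_domain⟩

namespace RegularityAssumptions

theorem ratio_mem (hd : d.RegularityAssumptions) {g : ℝ → ℝ} (hg : g ∈ [d.U2, d.U3]) :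
    (fun (P : d.Param L) _ ↦ g P.y / d.U1 P.y) ∈ boundedSmoothFamilies (d.Param L) n J := by
  obtain ⟨C, hC⟩ := hd.U_ratio_bdd g hg
  exact const_mem_boundedSmoothFamilies ⟨C, fun P ↦ hC P.y P.mem_domain.2.2⟩

theorem deriv_mul_div_mem (hd : d.RegularityAssumptions) {w wY : ℝ → ℝ → ℝ → ℝ}
    (hw : d.BddOnDomain w) (hwY : d.BddOnDomain wY) :
    (fun (P : d.Param L) _ ↦
      (d.U2 P.y * w P.t P.s P.y + d.U1 P.y * wY P.t P.s P.y) / d.U1 P.y) ∈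
      boundedSmoothFamilies (d.Param L) n J := by
  have hU₂ := hd.ratio_mem (L := L) (n := n) (J := J) (g := d.U2) (by simp)
  convert add_mem (mul_mem hU₂ hw.const_mem) hwY.const_mem using 1
  ext P
  have := (hd.U1_pos P.y).ne'
  simp only [Pi.add_apply, Pi.mul_apply]
  field_simp

theorem deriv_deriv_mul_div_mem (hd : d.RegularityAssumptions) {w wY wYY : ℝ → ℝ → ℝ → ℝ}
    (hw : d.BddOnDomain w) (hwY : d.BddOnDomain wY) (hwYY : d.BddOnDomain wYY) :
    (fun (P : d.Param L) _ ↦ (d.U3 P.y * w P.t P.s P.y + 2 * d.U2 P.y * wY P.t P.s P.y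
      + d.U1 P.y * wYY P.t P.s P.y) / d.U1 P.y) ∈ boundedSmoothFamilies (d.Param L) n J := by
  have hcross := mul_mem (hd.ratio_mem (L := L) (n := n) (J := J) (g := d.U2) (by simp))
    hwY.const_mem
  convert add_mem (add_mem (mul_mem (hd.ratio_mem (g := d.U3) (by simp)) hw.const_mem)
    (add_mem hcross hcross)) hwYY.const_mem using 1
  ext P
  have := (hd.U1_pos P.y).ne'
  simp only [Pi.add_apply, Pi.mul_apply]
  field_simp
  ring

theorem wPsiY_div_mem (hd : d.RegularityAssumptions) (hJ : Bornology.IsBounded J) :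
    (fun (P : d.Param L) ψ ↦ d.wPsiY ψ P.t P.s P.y / d.U1 P.y) ∈
      boundedSmoothFamilies (d.Param L) n J := by
  convert quadratic_mem_boundedSmoothFamilies hJ
    (const_mem_boundedSmoothFamilies (c := fun _ ↦ 1) ⟨1, by simp⟩)
    (hd.deriv_mul_div_mem (w := d.wt) (wY := d.wtY) (hd.wt_bdd _ (by simp)) (hd.wt_bdd _ (by simp)))
    (hd.deriv_mul_div_mem (w := d.wh) (wY := d.whY) (hd.wh_bdd _ (by simp)) (hd.wh_bdd _ (by simp)))
    using 3 with P ψ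
  have := (hd.U1_pos P.y).ne'
  simp only [wPsiY]
  field_simp

theorem wPsiSS_div_mem (hd : d.RegularityAssumptions) (hJ : Bornology.IsBounded J) :
    (fun (P : d.Param L) ψ ↦ d.wPsiSS ψ P.t P.s P.y / d.U1 P.y) ∈
      boundedSmoothFamilies (d.Param L) n J := by
  convert quadratic_mem_boundedSmoothFamilies hJ
    (const_mem_boundedSmoothFamilies (c := fun _ ↦ 0) ⟨0, by simp⟩)
    (hd.wt_bdd d.wtSS (by simp)).const_mem (hd.wh_bdd d.whSS (by simp)).const_mem
    using 3 with P ψ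
  have := (hd.U1_pos P.y).ne'
  simp only [wPsiSS]
  field_simp
  ring

theorem wPsiSY_div_mem (hd : d.RegularityAssumptions) (hJ : Bornology.IsBounded J) :
    (fun (P : d.Param L) ψ ↦ d.wPsiSY ψ P.t P.s P.y / d.U1 P.y) ∈
      boundedSmoothFamilies (d.Param L) n J := by
  convert quadratic_mem_boundedSmoothFamilies hJ
    (const_mem_boundedSmoothFamilies (c := fun _ ↦ 0) ⟨0, by simp⟩)
    (hd.deriv_mul_div_mem (w := d.wtS) (wY := d.wtSY) (hd.wt_bdd _ (by simp))
      (hd.wt_bdd _ (by simp)))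
    (hd.deriv_mul_div_mem (w := d.whS) (wY := d.whSY) (hd.wh_bdd _ (by simp))
      (hd.wh_bdd _ (by simp)))
    using 3 with P ψ
  have := (hd.U1_pos P.y).ne'
  simp only [wPsiSY]
  field_simp
  ring

theorem wPsiYY_div_mem (hd : d.RegularityAssumptions) (hJ : Bornology.IsBounded J) :
    (fun (P : d.Param L) ψ ↦ d.wPsiYY ψ P.t P.s P.y / d.U1 P.y) ∈
      boundedSmoothFamilies (d.Param L) n J := by
  convert quadratic_mem_boundedSmoothFamilies hJ (hd.ratio_mem (g := d.U2) (by simp))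
    (hd.deriv_deriv_mul_div_mem (w := d.wt) (wY := d.wtY) (wYY := d.wtYY)
      (hd.wt_bdd _ (by simp)) (hd.wt_bdd _ (by simp)) (hd.wt_bdd _ (by simp)))
    (hd.deriv_deriv_mul_div_mem (w := d.wh) (wY := d.whY) (wYY := d.whYY)
      (hd.wh_bdd _ (by simp)) (hd.wh_bdd _ (by simp)) (hd.wh_bdd _ (by simp)))
    using 3 with P ψ
  have := (hd.U1_pos P.y).ne'
  simp only [wPsiYY]
  field_simp

theorem tilt_mem (hd : d.RegularityAssumptions) (hJ : Bornology.IsBounded J) :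
    (fun P : d.Param L ↦ d.tilt P.t P.s P.y P.ϑ) ∈ boundedSmoothFamilies (d.Param L) n J := by
  have hX := id_mem_boundedSmoothFamilies (ι := d.Param L) (n := n) hJ
  have hϑ : (fun (P : d.Param L) _ ↦ P.ϑ) ∈ boundedSmoothFamilies (d.Param L) n J :=
    const_mem_boundedSmoothFamilies ⟨L, fun P ↦ abs_le.2 P.mem_Icc⟩
  have hs : (fun (P : d.Param L) _ ↦ P.s) ∈ boundedSmoothFamilies (d.Param L) n J := by
    obtain ⟨C, hC⟩ := (Metric.isBounded_Ioo d.K⁻¹ d.K).exists_norm_le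
    exact const_mem_boundedSmoothFamilies ⟨C, fun P ↦ hC P.s P.mem_domain.2.1⟩
  have hV : (fun (P : d.Param L) _ ↦ P.s ^ 2 * d.Vss P.t P.s) ∈
      boundedSmoothFamilies (d.Param L) n J := by
    obtain ⟨C, hC⟩ := hd.Vss_bdd
    exact const_mem_boundedSmoothFamilies ⟨C, fun P ↦ hC P.t P.mem_domain.1 P.s P.mem_domain.2.1⟩
  have hcross := mul_mem (mul_mem hϑ hX) (hd.wPsiSY_div_mem hJ)
  have hcurv := add_mem (add_mem (add_mem (hd.wPsiSS_div_mem hJ) hcross) hcross)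
    (mul_mem (pow_mem (mul_mem hϑ hX) 2) (hd.wPsiYY_div_mem hJ))
  convert mul_mem hX (sub_mem (mul_mem hV (hd.wPsiY_div_mem hJ)) (mul_mem (pow_mem hs 2) hcurv))
    using 1
  ext P ψ
  have := (hd.U1_pos P.y).ne'
  simp only [tilt, Pi.add_apply, Pi.sub_apply, Pi.mul_apply, Pi.pow_apply]
  field_simp
  ring

end RegularityAssumptions

end TiltBounds

end HedgeData

theorem smooth_worst_case_volatility_general (d : HedgeData) (hd : d.RegularityAssumptions)
    (L : ℝ) :
    ∃ ψ₁ > (0 : ℝ), ∃ M > (0 : ℝ),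
      ∀ t ∈ Ioo 0 d.T, ∀ s ∈ Ioo d.K⁻¹ d.K, ∀ y ∈ Ioo d.yl d.yu, ∀ ϑ ∈ Icc (-L) L,
        ∃ ςs : ℝ → ℝ,
          (∀ ψ ∈ Ioo (-ψ₁) ψ₁, ςs ψ ∈ Ioo 0 d.K) ∧
          ContDiffOn ℝ 3 ςs (Ioo (-ψ₁) ψ₁) ∧
          ςs 0 = d.sb t s ∧
          HasDerivAt ςs (d.sigmaTilde t s y) 0 ∧
          (∀ ψ ∈ Ioo (-ψ₁) ψ₁, |deriv (deriv ςs) ψ| ≤ M) ∧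
          (∀ ψ ∈ Ioo (-ψ₁) ψ₁,
            d.U1 y * d.f1 t s y (ςs ψ) - s ^ 2 * d.Vss t s * ςs ψ * d.wPsiY ψ t s y * ψ
              + ςs ψ * s ^ 2 * (d.wPsiSS ψ t s y + 2 * ϑ * ψ * d.wPsiSY ψ t s y
                + ϑ ^ 2 * ψ ^ 2 * d.wPsiYY ψ t s y) * ψ = 0) ∧
          (∀ ψ ∈ Ioo 0 ψ₁,
            IsMinOn (fun ς ↦ d.Ham ψ t s y (d.Vs t s + ϑ * ψ) ς) (Icc 0 d.K) (ςs ψ)) := by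
  obtain ⟨m, hm, hfm⟩ := hd.f2_lb
  obtain ⟨N, hfN⟩ := hd.f3_bdd
  obtain ⟨δ, hδ, M, hM⟩ := exists_uniform_smooth_minimizer
    (fun P : d.Param L ↦ hd.isPenalty hfm hfN P.mem_domain) hd.hK hd.heps hm one_pos
    (hd.tilt_mem (Metric.isBounded_Icc _ _)) fun P ↦ HedgeData.tilt_zero P.t P.s P.y P.ϑ
  refine ⟨δ, hδ, max M 1, by positivity, fun t ht s hs y hy ϑ hϑ ↦ ?_⟩
  have hU := hd.U1_pos y
  obtain ⟨hf₁, hf₂, -⟩ := hd.deriv_f_eq ⟨ht, hs, hy⟩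
  obtain ⟨x, hxK, hx, hx₀, hx', hx'', hfoc, hmin⟩ := hM ⟨t, s, y, ϑ, ⟨ht, hs, hy⟩, hϑ⟩
  refine ⟨x, hxK, hx, hx₀, ?_, fun ψ hψ ↦ (hx'' ψ hψ).trans (le_max_left _ _),
    fun ψ hψ ↦ (HedgeData.foc_eq_zero_iff hU.ne').2 (by simpa only [hf₁] using hfoc ψ hψ),
    fun ψ hψ ↦ HedgeData.isMinOn_ham hU hψ.1 (hmin ψ ⟨by linarith [hψ.1], hψ.2⟩)⟩
  refine hx'.congr_deriv ?_
  rw [HedgeData.deriv_tilt_zero ϑ hU.ne', hf₁, hf₂, HedgeData.sigmaTilde]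
  ring

/-- **Smooth dependence of the worst-case volatility on the uncertainty-aversion parameter.**
For every `L > 0` there are `ψ₁ > 0` and `M > 0` such that for every `(t,s,y) ∈ D` and
`ϑ̃ ∈ [-L,L]` there is a `C³` function `ς* : (-ψ₁,ψ₁) → (0,K)` with `ς*(0) = σ̄(t,s)`,
`(dς*/dψ)(0) = σ̃(t,s,y)`, `|d²ς*/dψ²| ≤ M`, satisfying the first-order condition for all
`ψ ∈ (-ψ₁,ψ₁)` and minimising the Hamiltonian over `[0,K]` for each `ψ ∈ (0,ψ₁)`. -/
theorem smooth_worst_case_volatility (d : HedgeData) (hd : d.Assumptions) (L : ℝ) (hL : 0 < L) :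
    ∃ ψ₁ > (0:ℝ), ∃ M > (0:ℝ),
      ∀ t ∈ Ioo (0:ℝ) d.T, ∀ s ∈ Ioo d.K⁻¹ d.K, ∀ y ∈ Ioo d.yl d.yu, ∀ ϑ ∈ Icc (-L) L,
        ∃ ςs : ℝ → ℝ,
          (∀ ψ ∈ Ioo (-ψ₁) ψ₁, ςs ψ ∈ Ioo (0:ℝ) d.K) ∧
          ContDiffOn ℝ 3 ςs (Ioo (-ψ₁) ψ₁) ∧
          ςs 0 = d.sb t s ∧
          HasDerivAt ςs (d.sigmaTilde t s y) 0 ∧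
          (∀ ψ ∈ Ioo (-ψ₁) ψ₁, |deriv (deriv ςs) ψ| ≤ M) ∧
          (∀ ψ ∈ Ioo (-ψ₁) ψ₁,
            d.U1 y * d.f1 t s y (ςs ψ) - s ^ 2 * d.Vss t s * ςs ψ * d.wPsiY ψ t s y * ψ
              + ςs ψ * s ^ 2 * (d.wPsiSS ψ t s y + 2 * ϑ * ψ * d.wPsiSY ψ t s y
                + ϑ ^ 2 * ψ ^ 2 * d.wPsiYY ψ t s y) * ψ = 0) ∧
          (∀ ψ ∈ Ioo (0:ℝ) ψ₁,
            IsMinOn (fun ς => d.Ham ψ t s y (d.Vs t s + ϑ * ψ) ς) (Icc (0:ℝ) d.K) (ςs ψ)) := by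
  exact smooth_worst_case_volatility_general d hd.regularityAssumptions L
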